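/- arXiv:1301.2629 — 3 statements merged into one kernel-verified Lean document; each statement's English description precedes it below -/
import Mathlib

section
/- Assume g_sr·P_s ≥ g_rd·P_r. Then the optimal correlation coefficient ρ* lies in the unit interval: 0 ≤ ρ* ≤ 1. -/
/-- If g_sr·P_s ≥ g_rd·P_r, then the optimal correlation coefficient ρ* lies in the
unit interval: 0 ≤ ρ* ≤ 1. -/
theorem rhoStar_mem_unit_interval
    (g_sd g_sr g_rd P_s P_r : ℝ)
    (hg_sd : 0 < g_sd) (hg_sr : 0 < g_sr) (hg_rd : 0 < g_rd)
    (hP_s : 0 < P_s) (hP_r : 0 < P_r)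
    (h : g_sr * P_s ≥ g_rd * P_r)
    (ρstar : ℝ)
    (hρstar : ρstar =
      (-Real.sqrt (g_sd * P_s * (g_rd * P_r)) +
        Real.sqrt (g_sr * P_s * ((g_sd + g_sr) * P_s - g_rd * P_r))) /
        ((g_sd + g_sr) * P_s)) :
    0 ≤ ρstar ∧ ρstar ≤ 1 := by
  have ha : 0 < g_sd * P_s := mul_pos hg_sd hP_s
  have hb : 0 < g_sr * P_s := mul_pos hg_sr hP_s
  have hc : 0 < g_rd * P_r := mul_pos hg_rd hP_r
  rw [add_mul] at hρstar
  generalize g_sd * P_s = a at *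
  generalize g_sr * P_s = b at *
  generalize g_rd * P_r = c at *
  have h1 : Real.sqrt (a * c) ≤ Real.sqrt (b * (a + b - c)) := by
    apply Real.sqrt_le_sqrt
    nlinarith [mul_nonneg (add_pos ha hb).le (sub_nonneg.2 h)]
  have h2 : Real.sqrt (b * (a + b - c)) ≤ a + b := by
    apply Real.sqrt_le_iff.2
    refine ⟨by linarith, ?_⟩
    nlinarith [mul_pos ha hb, mul_pos hb hc, mul_pos ha ha]
  have h3 := Real.sqrt_nonneg (a * c)
  rw [hρstar]
  refine ⟨div_nonneg (by linarith) (by linarith), ?_⟩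
  rw [div_le_one (by linarith)]
  linarith
end

section
/- Closed form of the AWGN cutset upper bound when the relay-to-destination link dominates: if g_sr·P_s ≤ g_rd·P_r, then the supremum over ρ ∈ [−1,1] of min(C(B(ρ)), C(M(ρ))) equals C((g_sd + g_sr)·P_s/N), and it is attained at ρ = 0. -/
/-- Closed form of the AWGN cutset upper bound when the relay-to-destination link
dominates: if g_sr·P_s ≤ g_rd·P_r, then the supremum over ρ ∈ [−1,1] of
min(C(B(ρ)), C(M(ρ))) equals C((g_sd + g_sr)·P_s/N), attained at ρ = 0. -/
theorem cutset_closed_form_relay_dest_dominates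
    (g_sd g_sr g_rd P_s P_r N : ℝ)
    (hg_sd : 0 < g_sd) (hg_sr : 0 < g_sr) (hg_rd : 0 < g_rd)
    (hP_s : 0 < P_s) (hP_r : 0 < P_r) (hN : 0 < N)
    (C B M : ℝ → ℝ)
    (hC : ∀ x, C x = (1 / 2) * Real.logb 2 (1 + x))
    (hB : ∀ ρ, B ρ = (g_sd + g_sr) * P_s * (1 - ρ ^ 2) / N)
    (hM : ∀ ρ, M ρ =
      (g_sd * P_s + g_rd * P_r + 2 * ρ * Real.sqrt (g_sd * P_s * (g_rd * P_r))) / N)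
    (h : g_sr * P_s ≤ g_rd * P_r) :
    IsGreatest ((fun ρ => min (C (B ρ)) (C (M ρ))) '' Set.Icc (-1 : ℝ) 1)
        (C ((g_sd + g_sr) * P_s / N)) ∧
      min (C (B 0)) (C (M 0)) = C ((g_sd + g_sr) * P_s / N) := by
  have mono : ∀ x y : ℝ, 0 ≤ x → x ≤ y → C x ≤ C y := by
    intro x y hx hxy
    rw [hC, hC]
    have := Real.logb_le_logb_of_le (b := 2) (by norm_num) (by linarith : 0 < 1 + x)
      (by linarith : 1 + x ≤ 1 + y)
    linarith
  have hB0 : B 0 = (g_sd + g_sr) * P_s / N := by rw [hB]; simp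
  have h0 : min (C (B 0)) (C (M 0)) = C ((g_sd + g_sr) * P_s / N) := by
    rw [hB0]
    apply min_eq_left
    apply mono _ _ (by positivity)
    rw [hM]
    apply div_le_div_of_nonneg_right _ hN.le
    nlinarith
  refine ⟨⟨⟨0, by norm_num, h0⟩, ?_⟩, h0⟩
  rintro _ ⟨ρ, ⟨h1, h2⟩, rfl⟩
  apply (min_le_left _ _).trans
  have hr : 0 ≤ 1 - ρ ^ 2 := by nlinarith
  have hp : 0 < (g_sd + g_sr) * P_s := by positivity
  rw [hB]
  apply mono
  · positivity
  · apply div_le_div_of_nonneg_right _ hN.le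
    nlinarith [mul_nonneg hp.le (sq_nonneg ρ)]
end

section
/- Closed form of the AWGN cutset upper bound when the source-to-relay link dominates: if g_sr·P_s ≥ g_rd·P_r, then the supremum over ρ ∈ [−1,1] of min(C(B(ρ)), C(M(ρ))) equals C(B(ρ*)) = C(M(ρ*)), and it is attained at ρ = ρ*, where ρ* = (−√(g_sd·P_s·g_rd·P_r) + √(g_sr·P_s·((g_sd + g_sr)·P_s − g_rd·P_r)))/((g_sd + g_sr)·P_s). -/
/-- Closed form of the AWGN cutset upper bound when the source-to-relay link
dominates: if g_sr·P_s ≥ g_rd·P_r, then the supremum over ρ ∈ [−1,1] of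
min(C(B(ρ)), C(M(ρ))) equals C(B(ρ*)) = C(M(ρ*)), attained at ρ = ρ*. -/
theorem cutset_closed_form_source_relay_dominates
    (g_sd g_sr g_rd P_s P_r N : ℝ)
    (hg_sd : 0 < g_sd) (hg_sr : 0 < g_sr) (hg_rd : 0 < g_rd)
    (hP_s : 0 < P_s) (hP_r : 0 < P_r) (hN : 0 < N)
    (C B M : ℝ → ℝ)
    (hC : ∀ x, C x = (1 / 2) * Real.logb 2 (1 + x))
    (hB : ∀ ρ, B ρ = (g_sd + g_sr) * P_s * (1 - ρ ^ 2) / N)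
    (hM : ∀ ρ, M ρ =
      (g_sd * P_s + g_rd * P_r + 2 * ρ * Real.sqrt (g_sd * P_s * (g_rd * P_r))) / N)
    (h : g_sr * P_s ≥ g_rd * P_r)
    (ρstar : ℝ)
    (hρstar : ρstar =
      (-Real.sqrt (g_sd * P_s * (g_rd * P_r)) +
        Real.sqrt (g_sr * P_s * ((g_sd + g_sr) * P_s - g_rd * P_r))) /
        ((g_sd + g_sr) * P_s)) :
    IsGreatest ((fun ρ => min (C (B ρ)) (C (M ρ))) '' Set.Icc (-1 : ℝ) 1)
        (C (B ρstar)) ∧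
      C (B ρstar) = C (M ρstar) ∧
      min (C (B ρstar)) (C (M ρstar)) = C (B ρstar) := by
  have ha : 0 < g_sd * P_s := by positivity
  have hb : 0 < g_sr * P_s := by positivity
  have hc : 0 < g_rd * P_r := by positivity
  have hK : (g_sd + g_sr) * P_s = g_sd * P_s + g_sr * P_s := by ring
  rw [hK] at hρstar
  simp only [hK] at hB
  generalize g_sd * P_s = a at *
  generalize g_sr * P_s = b at *
  generalize g_rd * P_r = c at *
  have hs2 : Real.sqrt (a * c) ^ 2 = a * c := Real.sq_sqrt (by positivity)
  have ht2 : Real.sqrt (b * (a + b - c)) ^ 2 = b * (a + b - c) :=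
    Real.sq_sqrt (mul_nonneg hb.le (by linarith))
  have hst : Real.sqrt (a * c) ≤ Real.sqrt (b * (a + b - c)) :=
    Real.sqrt_le_sqrt (by nlinarith)
  have hs0 : 0 ≤ Real.sqrt (a * c) := Real.sqrt_nonneg _
  generalize Real.sqrt (a * c) = s at *
  generalize Real.sqrt (b * (a + b - c)) = t at *
  have hKpos : 0 < a + b := by linarith
  have hr0 : 0 ≤ ρstar := by
    rw [hρstar]; exact div_nonneg (by linarith) hKpos.le
  have ht : t = (a + b) * ρstar + s := by
    rw [hρstar]; field_simp; ring
  have hq : (a + b) * ρstar ^ 2 + 2 * ρstar * s = b - c := by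
    apply mul_left_cancel₀ hKpos.ne'
    rw [ht] at ht2
    linear_combination ht2 - hs2
  have hr1 : ρstar ≤ 1 := by
    by_contra hcon
    push Not at hcon
    have h1 : 0 ≤ ρstar * s := mul_nonneg hr0 hs0
    have h2 : 1 < ρstar ^ 2 := by nlinarith
    nlinarith
  have hBM : B ρstar = M ρstar := by
    rw [hB, hM]; congr 1; linear_combination -hq
  have hmono : ∀ x y, 0 ≤ x → x ≤ y → C x ≤ C y := by
    intro x y hx hxy
    rw [hC, hC]
    have := Real.logb_le_logb_of_le (b := 2) (by norm_num) (by linarith : 0 < 1 + x)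
      (by linarith : 1 + x ≤ 1 + y)
    linarith
  refine ⟨⟨⟨ρstar, ⟨by linarith, hr1⟩, by simp [hBM]⟩, ?_⟩, by rw [hBM], by simp [hBM]⟩
  rintro _ ⟨r, ⟨hl, hu⟩, rfl⟩
  rcases le_total ρstar r with hr | hr
  · refine (min_le_left _ _).trans (hmono _ _ ?_ ?_)
    · rw [hB]
      exact div_nonneg (mul_nonneg hKpos.le (by nlinarith)) hN.le
    · rw [hB, hB]
      have : ρstar ^ 2 ≤ r ^ 2 := by nlinarith
      gcongr
  · refine (min_le_right _ _).trans ?_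
    rw [hBM]
    refine hmono _ _ ?_ ?_
    · rw [hM]
      have h1 : 2 * s ≤ a + c := by
        exact (le_abs_self _).trans (abs_le_of_sq_le_sq (by nlinarith [sq_nonneg (a - c)]) (by linarith))
      exact div_nonneg (by nlinarith) hN.le
    · rw [hM, hM]
      gcongr
end
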